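/- arXiv:2201.03487 — 2 statements merged into one kernel-verified Lean document; each statement's English description precedes it below -/
import Mathlib

section
/- For every κ > 0 there exists C > 0 with the following property. For every x ∈ ℝ³, every v,w ∈ ℝ³ with ‖v‖,‖w‖ ≤ 1/4, and every t ∈ (0,1), writing a := ‖v×w‖/2 for the area of the triangle P = (x,v,w) and c(k) := a ∫₀¹ ∫₀^{1−s} exp(−2πi⟨k, x+sv+τw⟩) dτ ds ∈ ℂ for k ∈ ℤ³, one has ∑_{k∈ℤ³} (1+‖k‖²)^{κ} e^{−t‖k‖²} |c(k)|² ≤ C a t^{−1/2−κ}. -/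
noncomputable section
open scoped ENNReal

/-- `kn2 k = ‖k‖²` for `k ∈ ℤ³`. -/
def kn2 (k : Fin 3 → ℤ) : ℝ := ∑ i, ((k i : ℝ)) ^ 2

/-- The cross product of two vectors in `ℝ³`. -/
def cross (v w : EuclideanSpace ℝ (Fin 3)) : EuclideanSpace ℝ (Fin 3) :=
  (WithLp.equiv 2 (Fin 3 → ℝ)).symm
    ![v 1 * w 2 - v 2 * w 1, v 2 * w 0 - v 0 * w 2, v 0 * w 1 - v 1 * w 0]

/-- The area `‖v × w‖ / 2` of the triangle `P = (x, v, w)`. -/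
def triArea (v w : EuclideanSpace ℝ (Fin 3)) : ℝ := ‖cross v w‖ / 2

/-- The `k`-th Fourier coefficient of the surface-integration measure `δ_P` on the torus
along the filled triangle `P = (x, v, w)`:
`c(k) = |P| ∫₀¹ ∫₀^{1−s} exp(−2πi⟨k, x+sv+τw⟩) dτ ds`. -/
def triCoef (x v w : EuclideanSpace ℝ (Fin 3)) (k : Fin 3 → ℤ) : ℂ :=
  (triArea v w : ℂ) * ∫ s in (0:ℝ)..1, ∫ τ in (0:ℝ)..(1 - s),
    Complex.exp (-2 * (Real.pi : ℂ) * Complex.I *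
      (((∑ i, (k i : ℝ) * (x i + s * v i + τ * w i) : ℝ)) : ℂ))

/-!
By Parseval, `∑ₖ e^{-πs‖k‖²} |μ̂(k)|²` is the double integral of the heat kernel `K_s(z - y)` of the
torus against `μ ⊗ μ`. Two points of a triangle with edge vectors of length at most `1/4` differ by
a vector of length at most `1/2`, and on such vectors the functional equation of the theta function
bounds the `d`-dimensional kernel `K_s` by a multiple of the Euclidean Gaussian
`s^{-d/2} e^{-π‖·‖²/s}`. Integrating this Gaussian over the whole plane of the triangle gives `s`,
so every `y` contributes at most a multiple of `s^{1 - d/2}`, and the remaining integral over `y`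
gives the area. The weight `(1 + ‖k‖²)^κ` is absorbed by half of the factor `e^{-t‖k‖²}` at the
cost of `t^{-κ}`.
-/

section

open MeasureTheory Real Set UnitAddTorus HurwitzZeta
open scoped ComplexConjugate InnerProductSpace

section PiSums

variable {ι β 𝕜 : Type*} [Fintype ι] [Countable β] [RCLike 𝕜]

lemma integral_count_eq_tsum {E : Type*} [NormedAddCommGroup E] [NormedSpace ℝ E] [CompleteSpace E]
    [MeasurableSpace β] [MeasurableSingletonClass β] {f : β → E} (hf : Integrable f Measure.count) :
    ∫ n, f n ∂Measure.count = ∑' n, f n := by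
  simp [integral_countable hf, Measure.real]

lemma pi_count [MeasurableSpace β] [MeasurableSingletonClass β] :
    Measure.pi (fun _ : ι ↦ (Measure.count : Measure β)) = Measure.count :=
  Measure.ext_of_singleton fun k ↦ by simp [Measure.pi_singleton]

lemma hasSum_pi_prod {f : ι → β → 𝕜} (hf : ∀ i, Summable fun n ↦ ‖f i n‖) :
    HasSum (fun k : ι → β ↦ ∏ i, f i (k i)) (∏ i, ∑' n, f i n) := by
  let _ : MeasurableSpace β := ⊤
  have hint (i : ι) : Integrable (f i) Measure.count := integrable_count_iff.mpr (hf i)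
  have hprod : Integrable (fun k : ι → β ↦ ∏ i, f i (k i)) Measure.count :=
    pi_count (ι := ι) (β := β) ▸ Integrable.fintype_prod hint
  have htsum : ∑' k : ι → β, ∏ i, f i (k i) = ∏ i, ∑' n, f i n := by
    rw [← integral_count_eq_tsum hprod, ← pi_count, integral_fintype_prod_eq_prod]
    exact Finset.prod_congr rfl fun i _ ↦ integral_count_eq_tsum (hint i)
  exact htsum ▸ (integrable_count_iff.mp hprod).of_norm.hasSum

end PiSums

section OneDimensionalTheta

/-- The constant in the Gaussian bounds for the theta kernels, namely `e^{π/2} ∑ₙ e^{-πn²/2}`. -/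
def thetaConst : ℝ := exp (π / 2) * evenKernel 0 (1 / 2)

lemma thetaConst_pos : 0 < thetaConst := by
  have hsum := hasSum_int_evenKernel 0 (t := 1 / 2) (by norm_num)
  rw [AddCircle.coe_zero] at hsum
  exact mul_pos (exp_pos _) <| hsum.tsum_eq ▸
    hsum.summable.tsum_pos (fun n ↦ (exp_pos _).le) 0 (exp_pos _)

lemma exp_neg_intCast_add_sq_mul_le (n : ℤ) {z x : ℝ} (hz : |z| ≤ 1 / 2) (hx : 1 ≤ x) :
    exp (-π * (n + z) ^ 2 * x) ≤
      exp (-π * z ^ 2 * x) * (exp (π / 2) * exp (-π * n ^ 2 * (1 / 2))) := by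
  have habs_le_sq : |(n : ℝ)| ≤ (n : ℝ) ^ 2 := by
    exact_mod_cast sq_abs n ▸ Int.le_self_sq |n|
  have hcross : -|(n : ℝ)| ≤ 2 * (n * z) := by
    have := mul_le_mul_of_nonneg_left hz (abs_nonneg (n : ℝ))
    rw [← abs_mul] at this
    linarith [neg_abs_le ((n : ℝ) * z)]
  have hshift : (n : ℝ) ^ 2 - |(n : ℝ)| ≤ ((n + z) ^ 2 - z ^ 2) * x :=
    calc (n : ℝ) ^ 2 - |(n : ℝ)| ≤ ((n : ℝ) ^ 2 - |(n : ℝ)|) * x :=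
          le_mul_of_one_le_right (sub_nonneg.mpr habs_le_sq) hx
      _ ≤ ((n + z) ^ 2 - z ^ 2) * x :=
          mul_le_mul_of_nonneg_right (by linarith) (by linarith)
  have hsq : (n : ℝ) ^ 2 / 2 - 1 / 2 ≤ ((n + z) ^ 2 - z ^ 2) * x := by
    nlinarith [sq_nonneg (|(n : ℝ)| - 1), sq_abs (n : ℝ)]
  rw [← exp_add, ← exp_add, exp_le_exp]
  linarith [mul_le_mul_of_nonneg_left hsq pi_pos.le]

lemma evenKernel_le {z x : ℝ} (hz : |z| ≤ 1 / 2) (hx : 1 ≤ x) :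
    evenKernel z x ≤ thetaConst * exp (-π * z ^ 2 * x) := by
  have hsum := hasSum_int_evenKernel z (zero_lt_one.trans_le hx)
  have hsum₀ := (hasSum_int_evenKernel 0 (t := 1 / 2) (by norm_num)).mul_left (exp (π / 2))
  simp only [add_zero] at hsum₀
  rw [mul_comm]
  exact hasSum_le (exp_neg_intCast_add_sq_mul_le · hz hx) hsum (hsum₀.mul_left _)

lemma cosKernel_eq_mul_evenKernel (a : UnitAddCircle) {s : ℝ} (hs : 0 < s) :
    cosKernel a s = s ^ (-1 / 2 : ℝ) * evenKernel a s⁻¹ := by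
  rw [evenKernel_functional_equation, one_div s⁻¹, inv_inv, inv_rpow hs.le, one_div, inv_inv,
    ← mul_assoc, ← rpow_add hs]
  norm_num

lemma cosKernel_nonneg (a : UnitAddCircle) {s : ℝ} (hs : 0 < s) : 0 ≤ cosKernel a s := by
  rw [cosKernel_eq_mul_evenKernel a hs]
  induction a using QuotientAddGroup.induction_on with | H z =>
  exact mul_nonneg (by positivity)
    ((hasSum_int_evenKernel z (inv_pos.mpr hs)).nonneg fun n ↦ (exp_pos _).le)

lemma cosKernel_le {z s : ℝ} (hz : |z| ≤ 1 / 2) (hs : 0 < s) (hs' : s ≤ 1) :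
    cosKernel z s ≤ thetaConst * s ^ (-1 / 2 : ℝ) * exp (-(π / s) * z ^ 2) := by
  rw [cosKernel_eq_mul_evenKernel _ hs]
  calc s ^ (-1 / 2 : ℝ) * evenKernel z s⁻¹
      ≤ s ^ (-1 / 2 : ℝ) * (thetaConst * exp (-π * z ^ 2 * s⁻¹)) := by
        gcongr
        exact evenKernel_le hz ((one_le_inv₀ hs).mpr hs')
    _ = thetaConst * s ^ (-1 / 2 : ℝ) * exp (-(π / s) * z ^ 2) := by ring_nf

lemma hasSum_exp_mul_fourier (a : UnitAddCircle) {s : ℝ} (hs : 0 < s) :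
    HasSum (fun n : ℤ ↦ (exp (-π * s * n ^ 2) : ℂ) * fourier n a) (cosKernel a s) := by
  induction a using QuotientAddGroup.induction_on with | H z =>
  refine (hasSum_int_cosKernel z hs).congr_fun fun n ↦ ?_
  rw [fourier_coe_apply, mul_comm]
  push_cast
  ring_nf

end OneDimensionalTheta

section TorusHeatKernel

variable {ι : Type*}

/-- The projection `ℝ^ι → (ℝ/ℤ)^ι`. -/
def toTorus (y : EuclideanSpace ℝ ι) : UnitAddTorus ι := fun i ↦ (y i : UnitAddCircle)

@[fun_prop]
lemma continuous_toTorus : Continuous (toTorus : EuclideanSpace ℝ ι → UnitAddTorus ι) := by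
  unfold toTorus; fun_prop

lemma toTorus_sub (y z : EuclideanSpace ℝ ι) : toTorus (y - z) = toTorus y - toTorus z := rfl

variable [Fintype ι]

/-- The squared Euclidean norm of a lattice point `k ∈ ℤ^ι`. -/
def latticeNormSq (k : ι → ℤ) : ℝ := ∑ i, (k i : ℝ) ^ 2

lemma latticeNormSq_nonneg (k : ι → ℤ) : 0 ≤ latticeNormSq k :=
  Finset.sum_nonneg fun _ _ ↦ sq_nonneg _

/-- The heat kernel `∑ₖ e^{-πs‖k‖²} e^{2πi⟨k, z⟩}` of the torus `(ℝ/ℤ)^ι`, as the product of the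
one-dimensional theta kernels, whose time normalisation it inherits. -/
def torusHeatKernel (s : ℝ) (z : UnitAddTorus ι) : ℝ := ∏ i, cosKernel (z i) s

lemma torusHeatKernel_nonneg {s : ℝ} (hs : 0 < s) (z : UnitAddTorus ι) :
    0 ≤ torusHeatKernel s z :=
  Finset.prod_nonneg fun _ _ ↦ cosKernel_nonneg _ hs

lemma exp_mul_mFourier_eq_prod (s : ℝ) (k : ι → ℤ) (z : UnitAddTorus ι) :
    (exp (-π * s * latticeNormSq k) : ℂ) * mFourier k z =
      ∏ i, (exp (-π * s * k i ^ 2) : ℂ) * fourier (k i) (z i) := by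
  rw [Finset.prod_mul_distrib, latticeNormSq, Finset.mul_sum, exp_sum]
  push_cast
  rfl

lemma hasSum_torusHeatKernel {s : ℝ} (hs : 0 < s) (z : UnitAddTorus ι) :
    HasSum (fun k : ι → ℤ ↦ (exp (-π * s * latticeNormSq k) : ℂ) * mFourier k z)
      (torusHeatKernel s z) := by
  have hprod := hasSum_pi_prod fun i ↦ (hasSum_exp_mul_fourier (z i) hs).summable.norm
  simp only [(hasSum_exp_mul_fourier (z _) hs).tsum_eq] at hprod
  simpa only [exp_mul_mFourier_eq_prod, torusHeatKernel, Complex.ofReal_prod] using hprod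

lemma norm_mFourier_apply (k : ι → ℤ) (z : UnitAddTorus ι) : ‖mFourier k z‖ = 1 := by
  simp only [mFourier, ContinuousMap.coe_mk, norm_prod, fourier_apply, Circle.norm_coe,
    Finset.prod_const_one]

lemma summable_exp_neg_latticeNormSq {s : ℝ} (hs : 0 < s) :
    Summable fun k : ι → ℤ ↦ exp (-π * s * latticeNormSq k) := by
  refine (hasSum_torusHeatKernel hs 0).summable.norm.congr fun k ↦ ?_
  rw [norm_mul, norm_mFourier_apply, mul_one, Complex.norm_of_nonneg (exp_pos _).le]

lemma torusHeatKernel_toTorus_le {s : ℝ} (hs : 0 < s) (hs' : s ≤ 1) {y : EuclideanSpace ℝ ι}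
    (hy : ‖y‖ ≤ 1 / 2) :
    torusHeatKernel s (toTorus y) ≤
      (thetaConst * s ^ (-1 / 2 : ℝ)) ^ Fintype.card ι * exp (-(π / s) * ‖y‖ ^ 2) := by
  calc torusHeatKernel s (toTorus y)
      ≤ ∏ i, thetaConst * s ^ (-1 / 2 : ℝ) * exp (-(π / s) * y i ^ 2) :=
        Finset.prod_le_prod (fun i _ ↦ cosKernel_nonneg _ hs) fun i _ ↦
          cosKernel_le ((PiLp.norm_apply_le y i).trans hy) hs hs'
    _ = (thetaConst * s ^ (-1 / 2 : ℝ)) ^ Fintype.card ι * exp (-(π / s) * ‖y‖ ^ 2) := by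
        rw [Finset.prod_mul_distrib, Finset.prod_const, Finset.card_univ, ← exp_sum,
          ← Finset.mul_sum, EuclideanSpace.real_norm_sq_eq]

end TorusHeatKernel

section FourierEnergy

variable {ι : Type*} [Fintype ι]

/-- The `k`-th Fourier coefficient `∫ e^{-2πi⟨k, z⟩} dμ(z)` of a measure on the torus; Mathlib's
`mFourierCoeff` is the corresponding notion for functions. -/
def measureFourierCoeff (μ : Measure (UnitAddTorus ι)) (k : ι → ℤ) : ℂ := ∫ z, mFourier (-k) z ∂μ

lemma mFourier_sub_apply (k : ι → ℤ) (y z : UnitAddTorus ι) :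
    mFourier k (y - z) = mFourier k y * conj (mFourier k z) := by
  rw [← mFourier_neg]
  simp [mFourier, fourier_apply, sub_eq_add_neg, AddCircle.toCircle_add,
    Finset.prod_mul_distrib]

lemma integral_mFourier_sub (μ : Measure (UnitAddTorus ι)) [SFinite μ] (k : ι → ℤ) :
    ∫ p, mFourier k (p.2 - p.1) ∂(μ.prod μ) = (‖measureFourierCoeff μ k‖ ^ 2 : ℝ) := by
  have hconj : ∫ z, mFourier k z ∂μ = conj (measureFourierCoeff μ k) := by
    simp only [measureFourierCoeff, ← integral_conj, mFourier_neg, Complex.conj_conj]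
  simp only [mFourier_sub_apply, mul_comm (mFourier k _), ← mFourier_neg (n := k)]
  rw [integral_prod_mul (fun y ↦ mFourier (-k) y) (fun z ↦ mFourier k z), hconj,
    ← measureFourierCoeff, Complex.mul_conj, Complex.normSq_eq_norm_sq]

lemma hasSum_exp_mul_norm_measureFourierCoeff_sq (μ : Measure (UnitAddTorus ι)) [IsFiniteMeasure μ]
    {s : ℝ} (hs : 0 < s) :
    HasSum (fun k ↦ exp (-π * s * latticeNormSq k) * ‖measureFourierCoeff μ k‖ ^ 2)
      (∫ p, torusHeatKernel s (p.2 - p.1) ∂(μ.prod μ)) := by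
  let F (k : ι → ℤ) (p : UnitAddTorus ι × UnitAddTorus ι) : ℂ :=
    (exp (-π * s * latticeNormSq k) : ℂ) * mFourier k (p.2 - p.1)
  have norm_F (k : ι → ℤ) (p) : ‖F k p‖ = exp (-π * s * latticeNormSq k) := by
    rw [norm_mul, norm_mFourier_apply, mul_one, Complex.norm_of_nonneg (exp_pos _).le]
  have integrable_F (k : ι → ℤ) : Integrable (F k) (μ.prod μ) :=
    .of_bound (by fun_prop) _ (.of_forall fun p ↦ (norm_F k p).le)
  have summable_F : Summable fun k ↦ ∫ p, ‖F k p‖ ∂(μ.prod μ) := by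
    simp only [norm_F, integral_const]
    exact (summable_exp_neg_latticeNormSq hs).const_smul _
  have hsum := hasSum_integral_of_summable_integral_norm integrable_F summable_F
  simp only [F, (hasSum_torusHeatKernel hs _).tsum_eq, integral_const_mul,
    integral_mFourier_sub, integral_complex_ofReal] at hsum
  exact_mod_cast hsum

lemma tsum_ofReal_exp_mul_norm_measureFourierCoeff_sq_le (μ : Measure (UnitAddTorus ι))
    [IsFiniteMeasure μ] {s : ℝ} (hs : 0 < s) :
    ∑' k, ENNReal.ofReal (exp (-π * s * latticeNormSq k) * ‖measureFourierCoeff μ k‖ ^ 2) ≤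
      ∫⁻ y, ∫⁻ z, ENNReal.ofReal (torusHeatKernel s (z - y)) ∂μ ∂μ := by
  have hsum := hasSum_exp_mul_norm_measureFourierCoeff_sq μ hs
  have hK (z : UnitAddTorus ι) : 0 ≤ torusHeatKernel s z := torusHeatKernel_nonneg hs z
  calc ∑' k, ENNReal.ofReal (exp (-π * s * latticeNormSq k) * ‖measureFourierCoeff μ k‖ ^ 2)
      = ENNReal.ofReal (∫ p, torusHeatKernel s (p.2 - p.1) ∂(μ.prod μ)) := by
        rw [← ENNReal.ofReal_tsum_of_nonneg (fun k ↦ by positivity) hsum.summable, hsum.tsum_eq]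
    _ ≤ ∫⁻ p, ENNReal.ofReal (torusHeatKernel s (p.2 - p.1)) ∂(μ.prod μ) := by
        rw [← Real.enorm_of_nonneg (integral_nonneg fun p ↦ hK _)]
        simpa only [Real.enorm_of_nonneg (hK _)] using
          enorm_integral_le_lintegral_enorm (μ := μ.prod μ)
            fun p : UnitAddTorus ι × UnitAddTorus ι ↦ torusHeatKernel s (p.2 - p.1)
    _ ≤ ∫⁻ y, ∫⁻ z, ENNReal.ofReal (torusHeatKernel s (z - y)) ∂μ ∂μ := lintegral_prod_le _

end FourierEnergy

section PlaneGaussian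

variable {E : Type*} [NormedAddCommGroup E]

lemma norm_smul_add_smul_le [NormedSpace ℝ E] {v w : E} {a b r : ℝ} (hv : ‖v‖ ≤ r) (hw : ‖w‖ ≤ r)
    (ha : |a| ≤ 1) (hb : |b| ≤ 1) : ‖a • v + b • w‖ ≤ r + r := by
  refine norm_add_le_of_le ?_ ?_
  · grw [norm_smul, norm_eq_abs, ha, one_mul, hv]
  · grw [norm_smul, norm_eq_abs, hb, one_mul, hw]

variable [InnerProductSpace ℝ E]

/-- The area `√(‖v‖²‖w‖² - ⟪v, w⟫²) / 2` of a triangle with edge vectors `v` and `w`. -/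
def triangleArea (v w : E) : ℝ := √(‖v‖ ^ 2 * ‖w‖ ^ 2 - ⟪v, w⟫_ℝ ^ 2) / 2

lemma triangleArea_nonneg (v w : E) : 0 ≤ triangleArea v w := by
  unfold triangleArea; positivity

lemma four_mul_triangleArea_sq (v w : E) :
    4 * triangleArea v w ^ 2 = ‖v‖ ^ 2 * ‖w‖ ^ 2 - ⟪v, w⟫_ℝ ^ 2 := by
  have hcs : ⟪v, w⟫_ℝ ^ 2 ≤ ‖v‖ ^ 2 * ‖w‖ ^ 2 := by
    rw [← mul_pow, ← sq_abs]
    gcongr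
    exact abs_real_inner_le_norm v w
  rw [triangleArea, div_pow, sq_sqrt (sub_nonneg.mpr hcs)]
  ring

lemma norm_smul_add_smul_sq (v : E) {w : E} (hw : w ≠ 0) (a b : ℝ) :
    ‖a • v + b • w‖ ^ 2 = ‖w‖ ^ 2 * (b + a * ⟪v, w⟫_ℝ / ‖w‖ ^ 2) ^ 2 +
      (2 * triangleArea v w / ‖w‖) ^ 2 * a ^ 2 := by
  have hw' : ‖w‖ ≠ 0 := norm_ne_zero_iff.mpr hw
  have harea := four_mul_triangleArea_sq v w
  rw [div_pow, mul_pow, show (2 : ℝ) ^ 2 = 4 by norm_num, harea, norm_add_sq_real, norm_smul,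
    norm_smul, real_inner_smul_left, real_inner_smul_right, mul_pow, mul_pow, norm_eq_abs,
    norm_eq_abs, sq_abs, sq_abs]
  field_simp
  ring

lemma lintegral_exp_neg_mul_add_sq {b : ℝ} (hb : 0 < b) (r : ℝ) :
    ∫⁻ τ : ℝ, ENNReal.ofReal (exp (-b * (τ + r) ^ 2)) = ENNReal.ofReal √(π / b) := by
  rw [lintegral_add_right_eq_self (fun τ : ℝ ↦ ENNReal.ofReal (exp (-b * τ ^ 2))) r,
    ← ofReal_integral_eq_lintegral_ofReal (integrable_exp_neg_mul_sq hb)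
      (.of_forall fun _ ↦ (exp_pos _).le), integral_gaussian]

lemma lintegral_exp_neg_mul_norm_smul_add_smul_sq {v w : E} (hA : 0 < triangleArea v w) {c : ℝ}
    (hc : 0 < c) :
    ∫⁻ p : ℝ × ℝ, ENNReal.ofReal (exp (-c * ‖p.1 • v + p.2 • w‖ ^ 2)) =
      ENNReal.ofReal (π / (2 * c * triangleArea v w)) := by
  have hw : w ≠ 0 := by rintro rfl; simp [triangleArea] at hA
  have : 0 < ‖w‖ := norm_pos_iff.mpr hw
  set d := 2 * triangleArea v w / ‖w‖ with hd
  have : 0 < d := by positivity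
  have hsplit (a b : ℝ) : ENNReal.ofReal (exp (-c * ‖a • v + b • w‖ ^ 2)) =
      ENNReal.ofReal (exp (-(c * ‖w‖ ^ 2) * (b + a * ⟪v, w⟫_ℝ / ‖w‖ ^ 2) ^ 2)) *
        ENNReal.ofReal (exp (-(c * d ^ 2) * (a + 0) ^ 2)) := by
    rw [norm_smul_add_smul_sq v hw, ← hd, ← ENNReal.ofReal_mul (exp_pos _).le, ← exp_add]
    ring_nf
  calc ∫⁻ p : ℝ × ℝ, ENNReal.ofReal (exp (-c * ‖p.1 • v + p.2 • w‖ ^ 2))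
      = ∫⁻ a : ℝ, ∫⁻ b : ℝ, ENNReal.ofReal (exp (-c * ‖a • v + b • w‖ ^ 2)) :=
        lintegral_prod _ (by
          have : Continuous fun p : ℝ × ℝ ↦ exp (-c * ‖p.1 • v + p.2 • w‖ ^ 2) := by fun_prop
          exact this.measurable.ennreal_ofReal.aemeasurable)
    _ = ENNReal.ofReal √(π / (c * ‖w‖ ^ 2)) * ENNReal.ofReal √(π / (c * d ^ 2)) := by
        simp only [hsplit, lintegral_mul_const' _ _ ENNReal.ofReal_ne_top,
          lintegral_const_mul' _ _ ENNReal.ofReal_ne_top,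
          lintegral_exp_neg_mul_add_sq (show 0 < c * ‖w‖ ^ 2 by positivity),
          lintegral_exp_neg_mul_add_sq (show 0 < c * d ^ 2 by positivity)]
    _ = ENNReal.ofReal (π / (2 * c * triangleArea v w)) := by
        rw [← ENNReal.ofReal_mul (sqrt_nonneg _), ← sqrt_mul (by positivity)]
        congr 1
        rw [sqrt_eq_iff_mul_self_eq (by positivity) (by positivity), hd]
        field_simp

end PlaneGaussian

section Triangle

lemma setIntegral_regionBetween {α E : Type*} [MeasurableSpace α] [NormedAddCommGroup E]
    [NormedSpace ℝ E] {μ : Measure α} [SFinite μ] {f g : α → ℝ} {S : Set α} (hf : Measurable f)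
    (hg : Measurable g) (hS : MeasurableSet S) {F : α × ℝ → E}
    (hF : IntegrableOn F (regionBetween f g S) (μ.prod volume)) :
    ∫ p in regionBetween f g S, F p ∂(μ.prod volume) =
      ∫ a in S, (∫ b in Ioo (f a) (g a), F (a, b)) ∂μ := by
  have hmeas := measurableSet_regionBetween hf hg hS
  rw [← integral_indicator hmeas, integral_prod _ (hF.integrable_indicator hmeas),
    ← integral_indicator hS]
  refine integral_congr_ae (.of_forall fun a ↦ ?_)
  by_cases ha : a ∈ S
  · simp only [indicator_of_mem ha, ← integral_indicator measurableSet_Ioo]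
    simp [regionBetween, indicator, ha]
  · simp [regionBetween, ha]

/-- The parameter domain `{(a, b) | 0 < a ≤ 1, 0 < b < 1 - a}` of a triangle. -/
def standardTriangle : Set (ℝ × ℝ) := regionBetween 0 (fun a ↦ 1 - a) (Ioc 0 1)

lemma measurableSet_standardTriangle : MeasurableSet standardTriangle :=
  measurableSet_regionBetween measurable_zero (by fun_prop) measurableSet_Ioc

lemma standardTriangle_subset : standardTriangle ⊆ Icc 0 1 ×ˢ Icc 0 1 := by
  rintro ⟨a, b⟩ ⟨⟨ha₀, ha₁⟩, hb₀, hb₁⟩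
  simp only [Pi.zero_apply] at ha₀ ha₁ hb₀ hb₁
  exact ⟨⟨ha₀.le, ha₁⟩, hb₀.le, by linarith⟩

lemma volume_standardTriangle_le_one : volume standardTriangle ≤ 1 :=
  (measure_mono standardTriangle_subset).trans_eq <| by
    rw [Measure.volume_eq_prod, Measure.prod_prod]; simp

lemma setIntegral_standardTriangle {E : Type*} [NormedAddCommGroup E] [NormedSpace ℝ E]
    {F : ℝ × ℝ → E} (hF : Continuous F) :
    ∫ p in standardTriangle, F p = ∫ a in (0 : ℝ)..1, ∫ b in (0 : ℝ)..(1 - a), F (a, b) := by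
  have hint : IntegrableOn F standardTriangle (volume.prod volume) :=
    (hF.continuousOn.integrableOn_compact (isCompact_Icc.prod isCompact_Icc)).mono_set
      standardTriangle_subset
  rw [Measure.volume_eq_prod, standardTriangle, setIntegral_regionBetween measurable_zero
    (by fun_prop) measurableSet_Ioc hint, intervalIntegral.integral_of_le zero_le_one]
  refine setIntegral_congr_fun measurableSet_Ioc fun a ha ↦ ?_
  simp only [Pi.zero_apply]
  rw [intervalIntegral.integral_of_le (sub_nonneg.mpr ha.2), integral_Ioc_eq_integral_Ioo]

variable {ι : Type*} [Fintype ι] (x v w : EuclideanSpace ℝ ι)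

/-- The measure `δ_P` on the torus: integration, weighted by the area, over the image of the
triangle `P` with vertices `x`, `x + v`, `x + w`, in the parameters of `standardTriangle`. -/
def triangleMeasure : Measure (UnitAddTorus ι) :=
  ENNReal.ofReal (triangleArea v w) •
    (volume.restrict standardTriangle).map fun p ↦ toTorus (x + p.1 • v + p.2 • w)

instance : IsFiniteMeasure (volume.restrict standardTriangle) :=
  isFiniteMeasure_restrict.mpr (volume_standardTriangle_le_one.trans_lt ENNReal.one_lt_top).ne

instance : IsFiniteMeasure (triangleMeasure x v w) :=
  Measure.smul_finite _ ENNReal.ofReal_ne_top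

lemma lintegral_triangleMeasure_le (f : UnitAddTorus ι → ℝ≥0∞) :
    ∫⁻ z, f z ∂(triangleMeasure x v w) ≤ ENNReal.ofReal (triangleArea v w) *
      ∫⁻ p in standardTriangle, f (toTorus (x + p.1 • v + p.2 • w)) := by
  rw [triangleMeasure, lintegral_smul_measure, smul_eq_mul]
  gcongr
  exact lintegral_map_le _ _

lemma measureFourierCoeff_triangleMeasure (k : ι → ℤ) :
    measureFourierCoeff (triangleMeasure x v w) k = triangleArea v w *
      ∫ a in (0 : ℝ)..1, ∫ b in (0 : ℝ)..(1 - a),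
        mFourier (-k) (toTorus (x + a • v + b • w)) := by
  rw [measureFourierCoeff, triangleMeasure, integral_smul_measure,
    integral_map (by fun_prop) (by fun_prop), ENNReal.toReal_ofReal (triangleArea_nonneg v w),
    Complex.real_smul, setIntegral_standardTriangle
      (F := fun p ↦ mFourier (-k) (toTorus (x + p.1 • v + p.2 • w))) (by fun_prop)]

lemma mFourier_neg_toTorus (k : ι → ℤ) (y : EuclideanSpace ℝ ι) :
    mFourier (-k) (toTorus y) =
      Complex.exp (-2 * (π : ℂ) * Complex.I * ((∑ i, (k i : ℝ) * y i : ℝ) : ℂ)) := by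
  simp only [mFourier, ContinuousMap.coe_mk, toTorus, fourier_coe_apply, ← Complex.exp_sum]
  push_cast
  rw [Finset.mul_sum]
  exact congrArg Complex.exp <| Finset.sum_congr rfl fun i _ ↦ by
    simp only [Pi.neg_apply, Int.cast_neg, mul_neg, neg_mul, div_one, neg_inj]
    ring

variable {v w} {s : ℝ}

lemma torusHeatKernel_toTorus_sub_le (hv : ‖v‖ ≤ 1 / 4) (hw : ‖w‖ ≤ 1 / 4) (hs : 0 < s)
    (hs' : s ≤ 1) {p q : ℝ × ℝ} (hp : p ∈ standardTriangle) (hq : q ∈ standardTriangle) :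
    torusHeatKernel s
        (toTorus (x + p.1 • v + p.2 • w) - toTorus (x + q.1 • v + q.2 • w)) ≤
      (thetaConst * s ^ (-1 / 2 : ℝ)) ^ Fintype.card ι *
        exp (-(π / s) * ‖(p - q).1 • v + (p - q).2 • w‖ ^ 2) := by
  have hsub : x + p.1 • v + p.2 • w - (x + q.1 • v + q.2 • w) =
      (p - q).1 • v + (p - q).2 • w := by
    simp only [Prod.fst_sub, Prod.snd_sub]
    module
  obtain ⟨hp₁, hp₂⟩ := standardTriangle_subset hp
  obtain ⟨hq₁, hq₂⟩ := standardTriangle_subset hq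
  rw [← toTorus_sub, hsub]
  refine torusHeatKernel_toTorus_le hs hs' <| (norm_smul_add_smul_le hv hw
    (dist_le_of_mem_Icc_01 hp₁ hq₁) (dist_le_of_mem_Icc_01 hp₂ hq₂)).trans_eq (by norm_num)

lemma lintegral_torusHeatKernel_triangleMeasure_le (hv : ‖v‖ ≤ 1 / 4) (hw : ‖w‖ ≤ 1 / 4)
    (hs : 0 < s) (hs' : s ≤ 1) {q : ℝ × ℝ} (hq : q ∈ standardTriangle) :
    ∫⁻ z, ENNReal.ofReal (torusHeatKernel s (z - toTorus (x + q.1 • v + q.2 • w)))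
        ∂(triangleMeasure x v w) ≤
      ENNReal.ofReal ((thetaConst * s ^ (-1 / 2 : ℝ)) ^ Fintype.card ι * (s / 2)) := by
  have hθ := thetaConst_pos
  refine (lintegral_triangleMeasure_le x v w _).trans ?_
  rcases (triangleArea_nonneg v w).eq_or_lt with hA | hA
  · simp [← hA]
  set B := (thetaConst * s ^ (-1 / 2 : ℝ)) ^ Fintype.card ι
  have hB₀ : 0 ≤ B := by positivity
  let G (p : ℝ × ℝ) : ℝ≥0∞ := ENNReal.ofReal (exp (-(π / s) * ‖p.1 • v + p.2 • w‖ ^ 2))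
  calc ENNReal.ofReal (triangleArea v w) * ∫⁻ p in standardTriangle, ENNReal.ofReal
        (torusHeatKernel s (toTorus (x + p.1 • v + p.2 • w) - toTorus (x + q.1 • v + q.2 • w)))
      ≤ ENNReal.ofReal (triangleArea v w) *
          ∫⁻ p in standardTriangle, ENNReal.ofReal B * G (p - q) := by
        gcongr ENNReal.ofReal (triangleArea v w) * ?_
        refine setLIntegral_mono' measurableSet_standardTriangle fun p hp ↦ ?_
        rw [← ENNReal.ofReal_mul hB₀]
        gcongr
        exact torusHeatKernel_toTorus_sub_le x hv hw hs hs' hp hq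
    _ ≤ ENNReal.ofReal (triangleArea v w) * ∫⁻ p, ENNReal.ofReal B * G (p - q) := by
        gcongr
        exact Measure.restrict_le_self
    _ = ENNReal.ofReal (B * (s / 2)) := by
        rw [lintegral_const_mul' _ _ ENNReal.ofReal_ne_top, lintegral_sub_right_eq_self G,
          lintegral_exp_neg_mul_norm_smul_add_smul_sq hA (by positivity), ← ENNReal.ofReal_mul hB₀,
          ← ENNReal.ofReal_mul hA.le]
        congr 1
        field_simp

lemma tsum_ofReal_exp_mul_norm_measureFourierCoeff_triangleMeasure_sq_le (hv : ‖v‖ ≤ 1 / 4)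
    (hw : ‖w‖ ≤ 1 / 4) (hs : 0 < s) (hs' : s ≤ 1) :
    ∑' k, ENNReal.ofReal (exp (-π * s * latticeNormSq k) *
        ‖measureFourierCoeff (triangleMeasure x v w) k‖ ^ 2) ≤
      ENNReal.ofReal (triangleArea v w *
        ((thetaConst * s ^ (-1 / 2 : ℝ)) ^ Fintype.card ι * (s / 2))) := by
  set R := (thetaConst * s ^ (-1 / 2 : ℝ)) ^ Fintype.card ι * (s / 2)
  calc ∑' k, ENNReal.ofReal (exp (-π * s * latticeNormSq k) *
        ‖measureFourierCoeff (triangleMeasure x v w) k‖ ^ 2)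
      ≤ ∫⁻ y, ∫⁻ z, ENNReal.ofReal (torusHeatKernel s (z - y)) ∂(triangleMeasure x v w)
          ∂(triangleMeasure x v w) := tsum_ofReal_exp_mul_norm_measureFourierCoeff_sq_le _ hs
    _ ≤ ENNReal.ofReal (triangleArea v w) * ∫⁻ q in standardTriangle, ∫⁻ z, ENNReal.ofReal
          (torusHeatKernel s (z - toTorus (x + q.1 • v + q.2 • w))) ∂(triangleMeasure x v w) :=
        lintegral_triangleMeasure_le x v w _
    _ ≤ ENNReal.ofReal (triangleArea v w) * ∫⁻ _ in standardTriangle, ENNReal.ofReal R := by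
        gcongr ENNReal.ofReal (triangleArea v w) * ?_
        exact setLIntegral_mono' measurableSet_standardTriangle fun q hq ↦
          lintegral_torusHeatKernel_triangleMeasure_le x hv hw hs hs' hq
    _ ≤ ENNReal.ofReal (triangleArea v w * R) := by
        rw [setLIntegral_const, ENNReal.ofReal_mul (triangleArea_nonneg v w)]
        gcongr
        exact mul_le_of_le_one_right' volume_standardTriangle_le_one

end Triangle

section SobolevNorm

variable {ι : Type*} [Fintype ι] {κ t : ℝ}

lemma rpow_one_add_mul_exp_le {y : ℝ} (hκ : 0 ≤ κ) (ht : 0 < t) (ht' : t ≤ 1) (hy : 0 ≤ y) :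
    (1 + y) ^ κ * exp (-t * y) ≤
      (2 * κ) ^ κ * exp (1 / 2) * t ^ (-κ) * exp (-(t / 2) * y) := by
  have hpow : (t * (1 + y)) ^ κ ≤ (2 * κ) ^ κ * exp (t * (1 + y) / 2) := by
    have h := ProbabilityTheory.rpow_abs_le_mul_exp_abs (t * (1 + y)) hκ (t := 1 / 2) (by norm_num)
    rw [abs_of_nonneg (by positivity), abs_of_pos (by norm_num)] at h
    convert h using 3 <;> ring
  calc (1 + y) ^ κ * exp (-t * y) = t ^ (-κ) * (t * (1 + y)) ^ κ * exp (-t * y) := by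
        rw [mul_rpow ht.le (by positivity), ← mul_assoc, ← rpow_add ht, neg_add_cancel, rpow_zero,
          one_mul]
    _ ≤ t ^ (-κ) * ((2 * κ) ^ κ * exp (t * (1 + y) / 2)) * exp (-t * y) := by gcongr
    _ = (2 * κ) ^ κ * exp (t / 2) * t ^ (-κ) * exp (-(t / 2) * y) := by
        rw [show t * (1 + y) / 2 = t / 2 + t * y + -(t / 2) * y by ring, exp_add, exp_add,
          show -t * y = -(t * y) by ring, exp_neg (t * y)]
        field_simp
    _ ≤ (2 * κ) ^ κ * exp (1 / 2) * t ^ (-κ) * exp (-(t / 2) * y) := by gcongr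

lemma tsum_ofReal_sobolev_weight_mul_le {a : (ι → ℤ) → ℝ} (ha : ∀ k, 0 ≤ a k) (hκ : 0 ≤ κ)
    (ht : 0 < t) (ht' : t ≤ 1) :
    ∑' k, ENNReal.ofReal ((1 + latticeNormSq k) ^ κ * exp (-t * latticeNormSq k) * a k) ≤
      ENNReal.ofReal ((2 * κ) ^ κ * exp (1 / 2) * t ^ (-κ)) *
        ∑' k, ENNReal.ofReal (exp (-(t / 2) * latticeNormSq k) * a k) := by
  rw [← ENNReal.tsum_mul_left]
  refine ENNReal.tsum_le_tsum fun k ↦ ?_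
  rw [← ENNReal.ofReal_mul (by positivity), ← mul_assoc]
  exact ENNReal.ofReal_le_ofReal <| mul_le_mul_of_nonneg_right
    (rpow_one_add_mul_exp_le hκ ht ht' (latticeNormSq_nonneg k)) (ha k)

lemma mul_rpow_neg_half_pow_mul_half {c : ℝ} (θ : ℝ) (n : ℕ) (hc : 0 < c) (ht : 0 < t) :
    (θ * (t / c) ^ (-1 / 2 : ℝ)) ^ n * (t / c / 2) =
      θ ^ n / 2 * c ^ ((n : ℝ) / 2 - 1) * t ^ (1 - (n : ℝ) / 2) := by
  have hs : 0 < t / c := div_pos ht hc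
  calc (θ * (t / c) ^ (-1 / 2 : ℝ)) ^ n * (t / c / 2)
      = θ ^ n / 2 * ((t / c) ^ (-1 / 2 * n : ℝ) * (t / c) ^ (1 : ℝ)) := by
        rw [mul_pow, ← rpow_mul_natCast hs.le, rpow_one]
        ring
    _ = θ ^ n / 2 * (t / c) ^ (1 - (n : ℝ) / 2) := by
        rw [← rpow_add hs]
        ring_nf
    _ = θ ^ n / 2 * c ^ ((n : ℝ) / 2 - 1) * t ^ (1 - (n : ℝ) / 2) := by
        rw [div_rpow ht.le hc.le, ← neg_sub (1 : ℝ), rpow_neg hc.le]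
        ring

theorem stmt_3_general (hκ : 0 ≤ κ) :
    ∃ C : ℝ, 0 < C ∧ ∀ (x v w : EuclideanSpace ℝ ι) (t : ℝ),
      ‖v‖ ≤ 1 / 4 → ‖w‖ ≤ 1 / 4 → t ∈ Ioc 0 1 →
      ∑' k, ENNReal.ofReal ((1 + latticeNormSq k) ^ κ * exp (-t * latticeNormSq k) *
          ‖measureFourierCoeff (triangleMeasure x v w) k‖ ^ 2) ≤
        ENNReal.ofReal (C * triangleArea v w * t ^ (1 - (Fintype.card ι : ℝ) / 2 - κ)) := by
  have hθ := thetaConst_pos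
  have hκ' : 0 < (2 * κ) ^ κ := by
    rcases hκ.eq_or_lt with rfl | hκ
    · simp
    · positivity
  refine ⟨(2 * κ) ^ κ * exp (1 / 2) * (thetaConst ^ Fintype.card ι / 2 *
    (2 * π) ^ ((Fintype.card ι : ℝ) / 2 - 1)), by positivity, fun x v w t hv hw ⟨ht, ht'⟩ ↦ ?_⟩
  have hs : t / (2 * π) ≤ 1 := (div_le_one (by positivity)).mpr (by linarith [pi_gt_three])
  have henergy := tsum_ofReal_exp_mul_norm_measureFourierCoeff_triangleMeasure_sq_le x hv hw
    (show 0 < t / (2 * π) by positivity) hs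
  rw [mul_rpow_neg_half_pow_mul_half _ _ (by positivity) ht,
    show -π * (t / (2 * π)) = -(t / 2) by field_simp] at henergy
  refine (tsum_ofReal_sobolev_weight_mul_le (fun k ↦ by positivity) hκ ht ht').trans ?_
  grw [henergy]
  rw [← ENNReal.ofReal_mul (by positivity), sub_eq_add_neg _ κ, rpow_add ht]
  exact (congrArg ENNReal.ofReal (by ring)).le

end SobolevNorm

section SpatialTriangle

variable (x v w : EuclideanSpace ℝ (Fin 3))

lemma triArea_eq_triangleArea : triArea v w = triangleArea v w := by
  rw [triArea, triangleArea, EuclideanSpace.norm_eq]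
  congr 2
  simp only [EuclideanSpace.real_norm_sq_eq, PiLp.inner_apply, Fin.sum_univ_three, cross,
    WithLp.equiv_symm_apply, Matrix.cons_val_zero, norm_eq_abs, sq_abs, Matrix.cons_val_one,
    Matrix.cons_val, RCLike.inner_apply, ringHom_apply]
  ring

lemma triCoef_eq_measureFourierCoeff (k : Fin 3 → ℤ) :
    triCoef x v w k = measureFourierCoeff (triangleMeasure x v w) k := by
  simp only [triCoef, triArea_eq_triangleArea, measureFourierCoeff_triangleMeasure,
    mFourier_neg_toTorus, PiLp.add_apply, PiLp.smul_apply, smul_eq_mul]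

end SpatialTriangle

end

theorem stmt_3 (κ : ℝ) (hκ : 0 < κ) :
    ∃ C : ℝ, 0 < C ∧
      ∀ (x v w : EuclideanSpace ℝ (Fin 3)) (t : ℝ),
        ‖v‖ ≤ 1/4 → ‖w‖ ≤ 1/4 → t ∈ Set.Ioo (0:ℝ) 1 →
        ∑' k : Fin 3 → ℤ,
            ENNReal.ofReal
              ((1 + kn2 k) ^ κ * Real.exp (-t * kn2 k) * ‖triCoef x v w k‖ ^ 2)
          ≤ ENNReal.ofReal (C * triArea v w * t ^ (-(1:ℝ)/2 - κ)) := by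
  obtain ⟨C, hC, hbound⟩ := stmt_3_general (ι := Fin 3) hκ.le
  refine ⟨C, hC, fun x v w t hv hw ht ↦ ?_⟩
  have hkn2 : kn2 = latticeNormSq := rfl
  have hexp : -(1 : ℝ) / 2 - κ = 1 - (Fintype.card (Fin 3) : ℝ) / 2 - κ := by
    rw [Fintype.card_fin]
    norm_num
  simp only [hkn2, hexp, triCoef_eq_measureFourierCoeff, triArea_eq_triangleArea]
  exact hbound x v w t hv hw (Set.Ioo_subset_Ioc_self ht)
end
end

section
/- Let V be a finite-dimensional normed real vector space and let A : ℝ³ → Hom(ℝ³, V) be a bounded measurable ℤ³-periodic function (a V-valued 1-form on the torus). For s > 0 define (P_s A)(x) := ∫_{ℝ³} p_s(y) A(x−y) dy, where p_s(y) = (4πs)^{−3/2} exp(−‖y‖²/(4s)) is the heat kernel on ℝ³, and set P₀A := A. For a bounded measurable 1-form B and a segment (x,v) with ‖v‖ ≤ 1/4, let I_B(x,v) := ∫₀¹ B(x+τv)(v) dτ denote the line integral of B along the segment. Then for every α ∈ (0,1], every s ≥ 0, and every t > 0: sup{ ‖I_{P_s A}(x,v)‖/‖v‖^α : x ∈ ℝ³,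 0 < ‖v‖ < t, ‖v‖ ≤ 1/4 } ≤ sup{ ‖I_A(x,v)‖/‖v‖^α : x ∈ ℝ³, 0 < ‖v‖ < t, ‖v‖ ≤ 1/4 }. -/
noncomputable section
open MeasureTheory
open scoped ENNReal

/-- The lattice point of `ℝ³` associated to `m ∈ ℤ³`. -/
def latt3 (m : Fin 3 → ℤ) : EuclideanSpace ℝ (Fin 3) :=
  (WithLp.equiv 2 (Fin 3 → ℝ)).symm fun i => (m i : ℝ)

/-- The heat kernel `p_s(y) = (4πs)^{−3/2} exp(−‖y‖²/(4s))` on `ℝ³`. -/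
def heatKer (s : ℝ) (y : EuclideanSpace ℝ (Fin 3)) : ℝ :=
  (4 * Real.pi * s) ^ (-(3 : ℝ) / 2) * Real.exp (-‖y‖ ^ 2 / (4 * s))

variable {V : Type*} [NormedAddCommGroup V] [NormedSpace ℝ V] [FiniteDimensional ℝ V]

/-- The heat semigroup applied (componentwise) to a `V`-valued `1`-form on `ℝ³`:
`(P_s A)(x) = ∫ p_s(y) A(x−y) dy`, with `P₀ A = A`. -/
def heatSmooth (s : ℝ) (A : EuclideanSpace ℝ (Fin 3) → EuclideanSpace ℝ (Fin 3) →L[ℝ] V) :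
    EuclideanSpace ℝ (Fin 3) → EuclideanSpace ℝ (Fin 3) →L[ℝ] V :=
  if s = 0 then A else fun x => ∫ y : EuclideanSpace ℝ (Fin 3), heatKer s y • A (x - y)

/-- The line integral `I_B(x,v) = ∫₀¹ B(x+τv)(v) dτ` of a `1`-form `B` along the
segment `(x,v)`. -/
def lineInt (B : EuclideanSpace ℝ (Fin 3) → EuclideanSpace ℝ (Fin 3) →L[ℝ] V)
    (x v : EuclideanSpace ℝ (Fin 3)) : V :=
  ∫ τ in (0:ℝ)..1, B (x + τ • v) v

/-!
By Fubini, `I_{P_s A}(x, v)` is the convolution of `x ↦ I_A(x, v)` with the heat kernel. The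
kernel has `L¹` norm `1`, so `sup_x ‖I_{P_s A}(x, v)‖ ≤ sup_x ‖I_A(x, v)‖` for each fixed `v`;
dividing by `‖v‖ ^ α` and taking the supremum over `v` gives the claim.
-/

open ContinuousLinearMap (lsmul)
open scoped Convolution

section Convolution

variable {G T F F' : Type*} [NormedAddCommGroup F] [NormedSpace ℝ F]
  [NormedAddCommGroup F'] [NormedSpace ℝ F']
  [MeasurableSpace G] {μ : Measure G} {k : G → ℝ}

theorem enorm_convolution_lsmul_le [Sub G] (hk : AEStronglyMeasurable k μ) (f : G → F) (x : G) :
    ‖(k ⋆[lsmul ℝ ℝ, μ] f) x‖ₑ ≤ (∫⁻ y, ‖k y‖ₑ ∂μ) * ⨆ z, ‖f z‖ₑ :=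
  calc ‖(k ⋆[lsmul ℝ ℝ, μ] f) x‖ₑ
    _ ≤ ∫⁻ y, ‖k y • f (x - y)‖ₑ ∂μ := enorm_integral_le_lintegral_enorm _
    _ ≤ ∫⁻ y, ‖k y‖ₑ * ⨆ z, ‖f z‖ₑ ∂μ := by
      gcongr with y
      rw [enorm_smul]
      gcongr
      exact le_iSup (fun z => ‖f z‖ₑ) (x - y)
    _ = (∫⁻ y, ‖k y‖ₑ ∂μ) * ⨆ z, ‖f z‖ₑ := lintegral_mul_const'' _ hk.enorm

theorem convolutionExists_lsmul_of_bounded [AddGroup G] [MeasurableAdd G] [MeasurableNeg G]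
    (hk : Integrable k μ) {f : G → F} (hf : StronglyMeasurable f) {C : ℝ} (hC : ∀ x, ‖f x‖ ≤ C) :
    ConvolutionExists k f (lsmul ℝ ℝ) μ := fun x =>
  hk.smul_bdd C (hf.comp_measurable (measurable_id.const_sub x)).aestronglyMeasurable
    (ae_of_all _ fun y => hC (x - y))

theorem convolution_lsmul_clm_apply [Sub G] [CompleteSpace F'] {B : G → F →L[ℝ] F'} {x : G}
    (hB : ConvolutionExistsAt k B x (lsmul ℝ ℝ) μ) (w : F) :
    (k ⋆[lsmul ℝ ℝ, μ] B) x w = (k ⋆[lsmul ℝ ℝ, μ] fun z => B z w) x :=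
  ContinuousLinearMap.integral_apply hB w

theorem integral_convolution_lsmul_add [AddCommGroup G] [MeasurableAdd₂ G] [MeasurableNeg G]
    [SFinite μ] [MeasurableSpace T] {ν : Measure T} [IsFiniteMeasure ν] (hk : Integrable k μ)
    {f : G → F} (hf : StronglyMeasurable f) {C : ℝ} (hC : ∀ x, ‖f x‖ ≤ C)
    {γ : T → G} (hγ : Measurable γ) (x : G) :
    ∫ τ, (k ⋆[lsmul ℝ ℝ, μ] f) (x + γ τ) ∂ν
      = (k ⋆[lsmul ℝ ℝ, μ] fun z => ∫ τ, f (z + γ τ) ∂ν) x := by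
  have h_meas : StronglyMeasurable fun p : T × G => f (x + γ p.1 - p.2) :=
    hf.comp_measurable (by fun_prop)
  have h_int : Integrable (fun p : T × G => k p.2 • f (x + γ p.1 - p.2)) (ν.prod μ) :=
    (hk.comp_snd ν).smul_bdd C h_meas.aestronglyMeasurable (ae_of_all _ fun _ => hC _)
  calc ∫ τ, (k ⋆[lsmul ℝ ℝ, μ] f) (x + γ τ) ∂ν
    _ = ∫ y, ∫ τ, k y • f (x + γ τ - y) ∂ν ∂μ := integral_integral_swap h_int
    _ = ∫ y, k y • ∫ τ, f (x - y + γ τ) ∂ν ∂μ := by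
      simp only [integral_smul, add_sub_right_comm]

end Convolution

section HeatKernel

theorem integral_rpow_mul_exp_neg_sq_norm_div {E : Type*} [NormedAddCommGroup E]
    [InnerProductSpace ℝ E] [FiniteDimensional ℝ E] [MeasurableSpace E] [BorelSpace E]
    {s : ℝ} (hs : 0 < s) :
    ∫ y : E, (4 * Real.pi * s) ^ (-(Module.finrank ℝ E : ℝ) / 2)
      * Real.exp (-‖y‖ ^ 2 / (4 * s)) = 1 := by
  have h_gauss : ∫ y : E, Real.exp (-‖y‖ ^ 2 / (4 * s))
      = (4 * Real.pi * s) ^ (Module.finrank ℝ E / 2 : ℝ) := by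
    convert GaussianFourier.integral_rexp_neg_mul_sq_norm (V := E)
      (b := (4 * s)⁻¹) (by positivity) using 3
    · ring_nf
    · field_simp
  rw [integral_const_mul, h_gauss, ← Real.rpow_add (by positivity), neg_div, neg_add_cancel,
    Real.rpow_zero]

variable {s : ℝ}

theorem integral_heatKer (hs : 0 < s) : ∫ y, heatKer s y = 1 := by
  simpa [heatKer] using integral_rpow_mul_exp_neg_sq_norm_div (E := EuclideanSpace ℝ (Fin 3)) hs

theorem integrable_heatKer (hs : 0 < s) : Integrable (heatKer s) :=
  .of_integral_ne_zero (by simp [integral_heatKer hs])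

theorem heatKer_nonneg (hs : 0 ≤ s) (y : EuclideanSpace ℝ (Fin 3)) : 0 ≤ heatKer s y := by
  unfold heatKer
  positivity

theorem lintegral_enorm_heatKer (hs : 0 < s) : ∫⁻ y, ‖heatKer s y‖ₑ = 1 := by
  simp only [← ofReal_integral_norm_eq_lintegral_enorm (integrable_heatKer hs),
    Real.norm_of_nonneg (heatKer_nonneg hs.le _), integral_heatKer hs, ENNReal.ofReal_one]

end HeatKernel

section LineIntegral

variable {F : Type*} [NormedAddCommGroup F] [NormedSpace ℝ F]
  {A : EuclideanSpace ℝ (Fin 3) → EuclideanSpace ℝ (Fin 3) →L[ℝ] F} {s : ℝ}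

theorem heatSmooth_zero : heatSmooth 0 A = A :=
  if_pos rfl

theorem heatSmooth_of_ne_zero (hs : s ≠ 0) : heatSmooth s A = heatKer s ⋆[lsmul ℝ ℝ] A :=
  if_neg hs

theorem lineInt_heatSmooth [CompleteSpace F] (hmeas : StronglyMeasurable A) {C : ℝ}
    (hC : ∀ x, ‖A x‖ ≤ C) (hs : 0 < s) (x v : EuclideanSpace ℝ (Fin 3)) :
    lineInt (heatSmooth s A) x v = (heatKer s ⋆[lsmul ℝ ℝ] fun z => lineInt A z v) x := by
  have h_conv := convolutionExists_lsmul_of_bounded (integrable_heatKer hs) hmeas hC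
  have h_meas : StronglyMeasurable fun z => A z v :=
    (ContinuousLinearMap.apply ℝ F v).continuous.comp_stronglyMeasurable hmeas
  have h_bound (z) : ‖A z v‖ ≤ C * ‖v‖ := (A z).le_of_opNorm_le (hC z) v
  simp only [lineInt, heatSmooth_of_ne_zero hs.ne', convolution_lsmul_clm_apply (h_conv _),
    intervalIntegral.integral_of_le zero_le_one]
  exact integral_convolution_lsmul_add (integrable_heatKer hs) h_meas h_bound (by fun_prop) x

theorem enorm_lineInt_heatSmooth_le [CompleteSpace F] (hmeas : StronglyMeasurable A)
    (hbdd : ∃ C : ℝ, ∀ x, ‖A x‖ ≤ C) (hs : 0 ≤ s) (x v : EuclideanSpace ℝ (Fin 3)) :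
    ‖lineInt (heatSmooth s A) x v‖ₑ ≤ ⨆ z, ‖lineInt A z v‖ₑ := by
  obtain ⟨C, hC⟩ := hbdd
  obtain rfl | hs := hs.eq_or_lt
  · rw [heatSmooth_zero]
    exact le_iSup (fun z => ‖lineInt A z v‖ₑ) x
  · simpa only [lineInt_heatSmooth hmeas hC hs, lintegral_enorm_heatKer hs, one_mul] using
      enorm_convolution_lsmul_le (integrable_heatKer hs).aestronglyMeasurable
        (fun z => lineInt A z v) x

theorem stmt_17_general [CompleteSpace F] (hmeas : StronglyMeasurable A)
    (hbdd : ∃ C : ℝ, ∀ x, ‖A x‖ ≤ C) (hs : 0 ≤ s) (α : ℝ)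
    (S : Set (EuclideanSpace ℝ (Fin 3))) :
    (⨆ (x : EuclideanSpace ℝ (Fin 3)) (v ∈ S),
        ENNReal.ofReal (‖lineInt (heatSmooth s A) x v‖ / ‖v‖ ^ α))
      ≤ ⨆ (x : EuclideanSpace ℝ (Fin 3)) (v ∈ S),
          ENNReal.ofReal (‖lineInt A x v‖ / ‖v‖ ^ α) := by
  have h_weight (a : F) (v : EuclideanSpace ℝ (Fin 3)) :
      ENNReal.ofReal (‖a‖ / ‖v‖ ^ α) = ‖a‖ₑ * ENNReal.ofReal (‖v‖ ^ α)⁻¹ := by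
    rw [div_eq_mul_inv, ENNReal.ofReal_mul (norm_nonneg a), ofReal_norm]
  simp only [h_weight]
  refine iSup_le fun x => iSup₂_le fun v hv => ?_
  calc ‖lineInt (heatSmooth s A) x v‖ₑ * ENNReal.ofReal (‖v‖ ^ α)⁻¹
    _ ≤ (⨆ z, ‖lineInt A z v‖ₑ) * ENNReal.ofReal (‖v‖ ^ α)⁻¹ := by
      gcongr
      exact enorm_lineInt_heatSmooth_le hmeas hbdd hs x v
    _ = ⨆ z, ‖lineInt A z v‖ₑ * ENNReal.ofReal (‖v‖ ^ α)⁻¹ := ENNReal.iSup_mul _ _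
    _ ≤ _ := iSup_mono fun z => le_iSup₂_of_le v hv le_rfl

end LineIntegral

theorem stmt_17 (A : EuclideanSpace ℝ (Fin 3) → EuclideanSpace ℝ (Fin 3) →L[ℝ] V)
    (hmeas : StronglyMeasurable A) (hbdd : ∃ Cb : ℝ, ∀ x, ‖A x‖ ≤ Cb)
    (hper : ∀ (m : Fin 3 → ℤ) (x : EuclideanSpace ℝ (Fin 3)), A (x + latt3 m) = A x)
    (α : ℝ) (hα : α ∈ Set.Ioc (0:ℝ) 1) (s : ℝ) (hs : 0 ≤ s) (t : ℝ) (ht : 0 < t) :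
    (⨆ (x : EuclideanSpace ℝ (Fin 3)) (v : EuclideanSpace ℝ (Fin 3))
        (_ : 0 < ‖v‖) (_ : ‖v‖ < t) (_ : ‖v‖ ≤ 1/4),
          ENNReal.ofReal (‖lineInt (heatSmooth s A) x v‖ / ‖v‖ ^ α))
      ≤ ⨆ (x : EuclideanSpace ℝ (Fin 3)) (v : EuclideanSpace ℝ (Fin 3))
          (_ : 0 < ‖v‖) (_ : ‖v‖ < t) (_ : ‖v‖ ≤ 1/4),
            ENNReal.ofReal (‖lineInt A x v‖ / ‖v‖ ^ α) := by
  have := FiniteDimensional.complete ℝ V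
  simpa only [Set.mem_ofPred_eq, iSup_and] using
    stmt_17_general hmeas hbdd hs α {v | 0 < ‖v‖ ∧ ‖v‖ < t ∧ ‖v‖ ≤ 1 / 4}
end
end
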